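/- The running infimum p-value is valid at arbitrary random times: for any ℕ-valued random variable N (not necessarily a stopping time) and every a ∈ [0,1], sup_{θ*∈Θ_0} Pr_{θ*}(P̃_N ≤ a) ≤ a, where P̃_n = min_{s ≤ n} P_s and P_s = 1/M_{α,β,s} (taken to be +∞ when M_{α,β,s} = 0). -/

import Mathlib

open MeasureTheory ENNReal
open scoped BigOperators Classical

noncomputable section

/-- Division in `ℝ≥0∞` with the convention that the ratio is `0` when the
denominator is `0`. -/
def safeDiv (a b : ℝ≥0∞) : ℝ≥0∞ := if b = 0 then 0 else a / b

variable {d : ℕ} {π : Fin d → Type*} [∀ i, MeasurableSpace (π i)]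

/-- The marginal density on the coordinates in `S`, obtained by integrating a density
out over the coordinates in `[d] \ S` (as a function of the full vector, depending only
on the coordinates in `S`). -/
def marginal (μ : ∀ i, Measure (π i)) (S : Finset (Fin d))
    (f : (∀ i, π i) → ℝ≥0∞) : (∀ i, π i) → ℝ≥0∞ :=
  MeasureTheory.lmarginal μ Sᶜ f

/-- The conditional density of the coordinates in `T1` given the coordinates in `T2`,
with the convention that the ratio is `0` when the denominator is `0`. -/
def condDens (μ : ∀ i, Measure (π i)) (T1 T2 : Finset (Fin d))
    (f : (∀ i, π i) → ℝ≥0∞) (x : ∀ i, π i) : ℝ≥0∞ :=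
  safeDiv (marginal μ (T1 ∪ T2) f x) (marginal μ T2 f x)

/-- `𝕊_d`: the nonempty subsets of `[d]`. -/
abbrev Sd (d : ℕ) := {S : Finset (Fin d) // S.Nonempty}

/-- `𝕋_d`: ordered pairs of disjoint nonempty subsets of `[d]`. -/
abbrev Td (d : ℕ) := {T : Finset (Fin d) × Finset (Fin d) //
  T.1.Nonempty ∧ T.2.Nonempty ∧ Disjoint T.1 T.2}

/-- The individual composite likelihood
`p_{α,β}(x;θ) = ∏_S p_S(x_S;θ)^(α_S/γ) ∏_T p(x_{T←}|x_{T→};θ)^(β_T/γ)`,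
where `f = p(·;θ)` is the joint density. -/
def compLik (μ : ∀ i, Measure (π i)) (α : Sd d → ℝ) (β : Td d → ℝ) (γ : ℝ)
    (f : (∀ i, π i) → ℝ≥0∞) (x : ∀ i, π i) : ℝ≥0∞ :=
  (∏ S : Sd d, marginal μ S.1 f x ^ (α S / γ)) *
  (∏ T : Td d, condDens μ T.1.1 T.1.2 f x ^ (β T / γ))


/-! ### Marginals -/

lemma marginal_dep (μ : ∀ i, Measure (π i)) (S : Finset (Fin d))
    (f : (∀ i, π i) → ℝ≥0∞) {x y : ∀ i, π i} (h : ∀ i ∈ S, x i = y i) :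
    marginal μ S f x = marginal μ S f y := by
  unfold marginal
  exact lmarginal_congr μ f (fun i hi => h i (by simpa using hi))

lemma marginal_measurable (μ : ∀ i, Measure (π i)) [∀ i, SigmaFinite (μ i)] (S : Finset (Fin d))
    {f : (∀ i, π i) → ℝ≥0∞} (hf : Measurable f) : Measurable (marginal μ S f) :=
  hf.lmarginal μ

lemma lmarginal_pull (μ : ∀ i, Measure (π i)) (s : Finset (Fin d))
    {f g : (∀ i, π i) → ℝ≥0∞} (hf : Measurable f)
    (hg : ∀ x y : ∀ i, π i, (∀ i ∉ s, x i = y i) → g x = g y) :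
    lmarginal μ s (fun x => g x * f x) = fun x => g x * lmarginal μ s f x := by
  ext x
  unfold lmarginal
  have hm : Measurable fun y => f (Function.updateFinset x s y) :=
    hf.comp measurable_updateFinset
  rw [← lintegral_const_mul _ hm]
  refine lintegral_congr fun y => ?_
  dsimp only
  rw [hg (Function.updateFinset x s y) x (fun i hi => by simp [Function.updateFinset, hi])]

lemma lintegral_split (μ : ∀ i, Measure (π i)) [∀ i, SigmaFinite (μ i)] (S : Finset (Fin d))
    {f G : (∀ i, π i) → ℝ≥0∞} (hf : Measurable f) (hGm : Measurable G)
    (hG : ∀ x y : ∀ i, π i, (∀ i ∈ S, x i = y i) → G x = G y) (x0 : ∀ i, π i) :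
    ∫⁻ x, G x * f x ∂(Measure.pi μ) = lmarginal μ S (fun x => G x * marginal μ S f x) x0 := by
  rw [lintegral_eq_lmarginal_univ x0, ← Finset.union_compl S,
    lmarginal_union μ (fun x => G x * f x) (hGm.mul hf) disjoint_compl_right,
    lmarginal_pull μ Sᶜ hf (fun x y h => hG x y (fun i hi => h i (by simpa using hi)))]
  rfl

lemma lmarginal_marginal (μ : ∀ i, Measure (π i)) [∀ i, SigmaFinite (μ i)] (S : Finset (Fin d))
    {f : (∀ i, π i) → ℝ≥0∞} (hf : Measurable f) (x0 : ∀ i, π i) :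
    lmarginal μ S (marginal μ S f) x0 = ∫⁻ x, f x ∂(Measure.pi μ) := by
  have := lintegral_split μ S hf (G := fun _ => 1) measurable_const (fun _ _ _ => rfl) x0
  simpa using this.symm

/-- Almost surely, all the marginals of the true density are positive and finite. -/
lemma ae_good (μ : ∀ i, Measure (π i)) [∀ i, SigmaFinite (μ i)]
    {f : (∀ i, π i) → ℝ≥0∞} (hf : Measurable f) (hf1 : ∫⁻ x, f x ∂(Measure.pi μ) = 1) :
    ∀ᵐ x ∂((Measure.pi μ).withDensity f), ∀ S : Finset (Fin d),
      marginal μ S f x ≠ 0 ∧ marginal μ S f x ≠ ∞ := by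
  rcases isEmpty_or_nonempty (∀ i, π i) with h | ⟨⟨x0⟩⟩
  · simp at hf1
  rw [ae_all_iff]
  intro S
  have hm := marginal_measurable μ S hf
  have hA : MeasurableSet {x | marginal μ S f x = 0 ∨ marginal μ S f x = ∞} :=
    (hm (measurableSet_singleton 0)).union (hm (measurableSet_singleton ∞))
  set A := {x | marginal μ S f x = 0 ∨ marginal μ S f x = ∞} with hAdef
  rw [ae_iff]
  have hAe : {x | ¬ (marginal μ S f x ≠ 0 ∧ marginal μ S f x ≠ ∞)} = A := by
    ext x; simp only [hAdef, Set.mem_ofPred_eq]; tauto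
  rw [hAe, withDensity_apply _ hA, ← lintegral_indicator hA]
  have hind : (A.indicator fun a => f a) = fun x => (A.indicator (fun _ => (1 : ℝ≥0∞)) x) * f x := by
    ext x; by_cases hx : x ∈ A <;> simp [hx]
  have hdep : ∀ x y : ∀ i, π i, (∀ i ∈ S, x i = y i) →
      A.indicator (fun _ => (1 : ℝ≥0∞)) x = A.indicator (fun _ => (1 : ℝ≥0∞)) y := by
    intro x y hxy
    have h1 := marginal_dep μ S f hxy
    have : x ∈ A ↔ y ∈ A := by simp only [hAdef, Set.mem_ofPred_eq, h1]
    by_cases hx : x ∈ A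
    · simp [hx, this.1 hx]
    · have hy : y ∉ A := fun hy => hx (this.2 hy)
      simp [hx, hy]
  rw [hind, lintegral_split μ S hf (measurable_const.indicator hA) hdep x0]
  have h1 := lmarginal_marginal μ S hf x0
  rw [hf1] at h1
  unfold lmarginal at h1 ⊢
  have hfin := ae_lt_top (hm.comp (measurable_updateFinset (s := S) (x := x0)))
    (μ := Measure.pi fun i : S => μ i) (by
      change ∫⁻ y, marginal μ S f (Function.updateFinset x0 S y) ∂_ ≠ ∞
      rw [h1]; simp)
  rw [← lintegral_zero (μ := Measure.pi fun i : S => μ i)]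
  refine lintegral_congr_ae ?_
  filter_upwards [hfin] with y hy
  by_cases hx : Function.updateFinset x0 S y ∈ A
  · rcases hx with hx | hx
    · simp [hx]
    · exact absurd hx hy.ne
  · simp [hx]

/-! ### The ratio of composite likelihoods -/

/-- ratio of marginals -/
def mRatio (μ : ∀ i, Measure (π i)) (S : Finset (Fin d)) (f g : (∀ i, π i) → ℝ≥0∞)
    (x : ∀ i, π i) : ℝ≥0∞ :=
  marginal μ S g x * (marginal μ S f x)⁻¹

/-- ratio of conditionals -/
def cRatio (μ : ∀ i, Measure (π i)) (A B : Finset (Fin d)) (f g : (∀ i, π i) → ℝ≥0∞)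
    (x : ∀ i, π i) : ℝ≥0∞ :=
  condDens μ A B g x * (marginal μ B f x * (marginal μ (A ∪ B) f x)⁻¹)

/-- ratio of composite likelihoods -/
def compRatio (μ : ∀ i, Measure (π i)) (α : Sd d → ℝ) (β : Td d → ℝ) (γ : ℝ)
    (f g : (∀ i, π i) → ℝ≥0∞) (x : ∀ i, π i) : ℝ≥0∞ :=
  (∏ S : Sd d, mRatio μ S.1 f g x ^ (α S / γ)) *
  (∏ T : Td d, cRatio μ T.1.1 T.1.2 f g x ^ (β T / γ))

lemma safeDiv_eq (a b : ℝ≥0∞) : safeDiv a b = if b = 0 then 0 else a / b := by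
  unfold safeDiv; congr

lemma safeDiv_le (a b : ℝ≥0∞) : safeDiv a b ≤ a / b := by
  rw [safeDiv_eq]; split_ifs <;> simp

lemma measurable_safeDiv {A : Type*} [MeasurableSpace A] {f g : A → ℝ≥0∞}
    (hf : Measurable f) (hg : Measurable g) : Measurable fun x => safeDiv (f x) (g x) := by
  simp only [safeDiv_eq]
  exact Measurable.ite (hg (measurableSet_singleton 0)) measurable_const (hf.div hg)

lemma mul_inv_mul_le (a b : ℝ≥0∞) : a * b⁻¹ * b ≤ a := by
  rw [mul_assoc]
  exact mul_le_of_le_one_right' (ENNReal.inv_mul_le_one b)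

lemma measurable_condDens (μ : ∀ i, Measure (π i)) [∀ i, SigmaFinite (μ i)]
    (A B : Finset (Fin d)) {f : (∀ i, π i) → ℝ≥0∞} (hf : Measurable f) :
    Measurable (condDens μ A B f) :=
  measurable_safeDiv (marginal_measurable μ _ hf) (marginal_measurable μ _ hf)

lemma mRatio_lintegral (μ : ∀ i, Measure (π i)) [∀ i, SigmaFinite (μ i)] (S : Finset (Fin d))
    {f g : (∀ i, π i) → ℝ≥0∞} (hf : Measurable f) (hg : Measurable g)
    (hg1 : ∫⁻ x, g x ∂(Measure.pi μ) = 1) :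
    ∫⁻ x, mRatio μ S f g x * f x ∂(Measure.pi μ) ≤ 1 := by
  rcases isEmpty_or_nonempty (∀ i, π i) with h | ⟨⟨x0⟩⟩
  · simp
  have hm : Measurable (mRatio μ S f g) :=
    (marginal_measurable μ S hg).mul (marginal_measurable μ S hf).inv
  rw [lintegral_split μ S hf hm (fun x y h => by
    simp only [mRatio, marginal_dep μ S _ h]) x0]
  calc _ ≤ lmarginal μ S (marginal μ S g) x0 :=
        lmarginal_mono (fun x => mul_inv_mul_le _ _) x0
    _ = 1 := by rw [lmarginal_marginal μ S hg, hg1]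

lemma cRatio_lintegral (μ : ∀ i, Measure (π i)) [∀ i, SigmaFinite (μ i)] (A B : Finset (Fin d))
    (hAB : Disjoint A B)
    {f g : (∀ i, π i) → ℝ≥0∞} (hf : Measurable f) (hg : Measurable g)
    (hf1 : ∫⁻ x, f x ∂(Measure.pi μ) = 1) :
    ∫⁻ x, cRatio μ A B f g x * f x ∂(Measure.pi μ) ≤ 1 := by
  rcases isEmpty_or_nonempty (∀ i, π i) with h | ⟨⟨x0⟩⟩
  · simp
  have hm : Measurable (cRatio μ A B f g) :=
    (measurable_condDens μ A B hg).mul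
      ((marginal_measurable μ B hf).mul (marginal_measurable μ _ hf).inv)
  have hB : ∀ x y : ∀ i, π i, (∀ i ∈ A ∪ B, x i = y i) → ∀ i ∈ B, x i = y i :=
    fun x y h i hi => h i (Finset.mem_union_right _ hi)
  rw [lintegral_split μ (A ∪ B) hf hm (fun x y h => by
    simp only [cRatio, condDens, marginal_dep μ _ _ h, marginal_dep μ _ _ (hB x y h)]) x0]
  have hBA : ∀ x y : ∀ i, π i, (∀ i ∉ A, x i = y i) → ∀ i ∈ B, x i = y i :=
    fun x y h i hi => h i (fun hA => Finset.disjoint_left.1 hAB hA hi)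
  have hgC : lmarginal μ A (marginal μ (A ∪ B) g) = marginal μ B g := by
    unfold marginal
    rw [← lmarginal_union μ _ hg]
    · congr 1
      ext i
      simp only [Finset.mem_union, Finset.mem_compl]
      have h2 : i ∈ A → i ∉ B := fun h => Finset.disjoint_left.1 hAB h
      tauto
    · rw [Finset.disjoint_left]; intro i hi; simp [hi]
  calc _ ≤ lmarginal μ (A ∪ B) (fun x => (marginal μ B f x * (marginal μ B g x)⁻¹) *
          marginal μ (A ∪ B) g x) x0 := by
        refine lmarginal_mono (fun x => ?_) x0
        simp only [cRatio]
        calc _ = condDens μ A B g x * (marginal μ B f x *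
              (marginal μ (A ∪ B) f x)⁻¹ * marginal μ (A ∪ B) f x) := by ring
          _ ≤ (marginal μ (A ∪ B) g x / marginal μ B g x) * marginal μ B f x :=
            mul_le_mul' (safeDiv_le _ _) (mul_inv_mul_le _ _)
          _ = _ := by rw [div_eq_mul_inv]; ring
    _ ≤ lmarginal μ B (marginal μ B f) x0 := by
        rw [lmarginal_union' μ (fun x => marginal μ B f x * (marginal μ B g x)⁻¹ *
          marginal μ (A ∪ B) g x) (((marginal_measurable μ B hf).mul
          (marginal_measurable μ B hg).inv).mul (marginal_measurable μ _ hg)) hAB,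
          lmarginal_pull μ A (marginal_measurable μ _ hg) (fun x y h => by
            simp only [marginal_dep μ _ _ (hBA x y h)]), hgC]
        exact lmarginal_mono (fun x => mul_inv_mul_le _ _) x0
    _ = 1 := by rw [lmarginal_marginal μ B hf, hf1]

lemma compRatio_lintegral (μ : ∀ i, Measure (π i)) [∀ i, SigmaFinite (μ i)]
    (α : Sd d → ℝ) (β : Td d → ℝ)
    (hα : ∀ S, 0 ≤ α S) (hβ : ∀ T, 0 ≤ β T)
    (γ : ℝ) (hγ : γ = ∑ S, α S + ∑ T, β T) (hγpos : 0 < γ)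
    {f g : (∀ i, π i) → ℝ≥0∞} (hf : Measurable f) (hg : Measurable g)
    (hf1 : ∫⁻ x, f x ∂(Measure.pi μ) = 1) (hg1 : ∫⁻ x, g x ∂(Measure.pi μ) = 1) :
    ∫⁻ x, compRatio μ α β γ f g x ∂((Measure.pi μ).withDensity f) ≤ 1 := by
  let h : Sd d ⊕ Td d → (∀ i, π i) → ℝ≥0∞ :=
    Sum.elim (fun S => mRatio μ S.1 f g) (fun T => cRatio μ T.1.1 T.1.2 f g)
  let w : Sd d ⊕ Td d → ℝ := Sum.elim (fun S => α S / γ) (fun T => β T / γ)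
  have hm : ∀ i, Measurable (h i) := by
    rintro (S | T)
    · exact (marginal_measurable μ _ hg).mul (marginal_measurable μ _ hf).inv
    · exact (measurable_condDens μ _ _ hg).mul
        ((marginal_measurable μ _ hf).mul (marginal_measurable μ _ hf).inv)
  have hw0 : ∀ i, 0 ≤ w i := by
    rintro (S | T)
    · exact div_nonneg (hα S) hγpos.le
    · exact div_nonneg (hβ T) hγpos.le
  have hw : ∑ i, w i = 1 := by
    rw [Fintype.sum_sum_type]
    simp only [w, Sum.elim_inl, Sum.elim_inr]
    rw [← Finset.sum_div, ← Finset.sum_div, ← add_div, ← hγ, div_self hγpos.ne']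
  have hI : ∀ i, ∫⁻ x, h i x ∂((Measure.pi μ).withDensity f) ≤ 1 := by
    intro i
    rw [lintegral_withDensity_eq_lintegral_mul _ hf (hm i)]
    simp only [Pi.mul_apply, mul_comm (f _)]
    rcases i with S | T
    · exact mRatio_lintegral μ _ hf hg hg1
    · exact cRatio_lintegral μ _ _ T.2.2.2 hf hg hf1
  calc _ = ∫⁻ x, ∏ i, h i x ^ w i ∂((Measure.pi μ).withDensity f) := by
        refine lintegral_congr fun x => ?_
        rw [Fintype.prod_sum_type]
        rfl
    _ ≤ ∏ i, (∫⁻ x, h i x ∂((Measure.pi μ).withDensity f)) ^ w i :=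
        ENNReal.lintegral_prod_norm_pow_le _ (fun i _ => (hm i).aemeasurable) hw
          (fun i _ => hw0 i)
    _ ≤ 1 := Finset.prod_le_one' fun i _ => ENNReal.rpow_le_one (hI i) (hw0 i)

lemma condDens_pos_fin (μ : ∀ i, Measure (π i)) {f : (∀ i, π i) → ℝ≥0∞} {x : ∀ i, π i}
    (hx : ∀ S : Finset (Fin d), marginal μ S f x ≠ 0 ∧ marginal μ S f x ≠ ∞)
    (A B : Finset (Fin d)) : condDens μ A B f x ≠ 0 ∧ condDens μ A B f x ≠ ∞ := by
  unfold condDens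
  rw [safeDiv_eq, if_neg (hx B).1]
  exact ⟨ENNReal.div_ne_zero.2 ⟨(hx _).1, (hx _).2⟩, ENNReal.div_ne_top (hx _).2 (hx _).1⟩

lemma compLik_pos_fin (μ : ∀ i, Measure (π i)) (α : Sd d → ℝ) (β : Td d → ℝ)
    (γ : ℝ) {f : (∀ i, π i) → ℝ≥0∞} {x : ∀ i, π i}
    (hx : ∀ S : Finset (Fin d), marginal μ S f x ≠ 0 ∧ marginal μ S f x ≠ ∞) :
    compLik μ α β γ f x ≠ 0 ∧ compLik μ α β γ f x ≠ ∞ := by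
  unfold compLik
  refine ⟨mul_ne_zero (Finset.prod_ne_zero_iff.2 fun S _ => ?_)
    (Finset.prod_ne_zero_iff.2 fun T _ => ?_),
    ENNReal.mul_ne_top (ENNReal.prod_ne_top fun S _ => ?_) (ENNReal.prod_ne_top fun T _ => ?_)⟩
  · exact (ENNReal.rpow_pos (hx _).1.bot_lt (hx _).2).ne'
  · exact (ENNReal.rpow_pos (condDens_pos_fin μ hx _ _).1.bot_lt (condDens_pos_fin μ hx _ _).2).ne'
  · exact ENNReal.rpow_ne_top_of_ne_zero (hx _).1 (hx _).2
  · exact ENNReal.rpow_ne_top_of_ne_zero (condDens_pos_fin μ hx _ _).1 (condDens_pos_fin μ hx _ _).2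

lemma compLik_eq_ratio (μ : ∀ i, Measure (π i)) (α : Sd d → ℝ) (β : Td d → ℝ)
    (hα : ∀ S, 0 ≤ α S) (hβ : ∀ T, 0 ≤ β T)
    (γ : ℝ) (hγpos : 0 < γ) {f g : (∀ i, π i) → ℝ≥0∞} {x : ∀ i, π i}
    (hx : ∀ S : Finset (Fin d), marginal μ S f x ≠ 0 ∧ marginal μ S f x ≠ ∞) :
    compLik μ α β γ g x = compRatio μ α β γ f g x * compLik μ α β γ f x := by
  unfold compLik compRatio
  rw [mul_mul_mul_comm, ← Finset.prod_mul_distrib, ← Finset.prod_mul_distrib]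
  congr 1
  · refine Finset.prod_congr rfl fun S _ => ?_
    rw [← ENNReal.mul_rpow_of_nonneg _ _ (div_nonneg (hα S) hγpos.le), mRatio, mul_assoc,
      ENNReal.inv_mul_cancel (hx _).1 (hx _).2, mul_one]
  · refine Finset.prod_congr rfl fun T _ => ?_
    rw [← ENNReal.mul_rpow_of_nonneg _ _ (div_nonneg (hβ T) hγpos.le), cRatio]
    congr 1
    conv_rhs => rw [mul_assoc]; arg 2; rw [condDens, safeDiv_eq, if_neg (hx _).1]
    rw [div_eq_mul_inv, mul_mul_mul_comm, mul_comm (marginal μ T.1.2 f x), mul_mul_mul_comm,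
      mul_comm (marginal μ (T.1.1 ∪ T.1.2) f x), ENNReal.inv_mul_cancel (hx _).1 (hx _).2,
      ENNReal.mul_inv_cancel (hx _).1 (hx _).2]
    simp

lemma measurable_marginal_param (μ : ∀ i, Measure (π i)) [∀ i, SigmaFinite (μ i)]
    {Θ : Type*} [MeasurableSpace Θ] {p : Θ → (∀ i, π i) → ℝ≥0∞}
    (hp : Measurable (Function.uncurry p)) (S : Finset (Fin d)) :
    Measurable fun z : Θ × (∀ i, π i) => marginal μ S (p z.1) z.2 := by
  unfold marginal lmarginal
  refine Measurable.lintegral_prod_right' (f := fun q : (Θ × (∀ i, π i)) × (∀ i : (Sᶜ : Finset (Fin d)), π i) =>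
    p q.1.1 (Function.updateFinset q.1.2 Sᶜ q.2)) ?_
  exact hp.comp ((measurable_fst.comp measurable_fst).prodMk
    (measurable_updateFinset'.comp ((measurable_snd.comp measurable_fst).prodMk measurable_snd)))

lemma measurable_compRatio_param (μ : ∀ i, Measure (π i)) [∀ i, SigmaFinite (μ i)]
    (α : Sd d → ℝ) (β : Td d → ℝ) (γ : ℝ)
    {Θ : Type*} [MeasurableSpace Θ] {p : Θ → (∀ i, π i) → ℝ≥0∞}
    (hp : Measurable (Function.uncurry p)) {f : (∀ i, π i) → ℝ≥0∞} (hf : Measurable f) :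
    Measurable fun z : Θ × (∀ i, π i) => compRatio μ α β γ f (p z.1) z.2 := by
  have hfm : ∀ S, Measurable fun z : Θ × (∀ i, π i) => marginal μ S f z.2 :=
    fun S => (marginal_measurable μ S hf).comp measurable_snd
  have hpm := measurable_marginal_param μ hp
  unfold compRatio mRatio cRatio condDens
  refine Measurable.mul (Finset.measurable_prod _ fun S _ => ?_)
    (Finset.measurable_prod _ fun T _ => ?_)
  · exact ((hpm _).mul (hfm _).inv).pow_const _
  · exact ((measurable_safeDiv (hpm _) (hpm _)).mul ((hfm _).mul (hfm _).inv)).pow_const _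

/-! ### Ville -/

lemma indep_step {Ω Ω' E Θ : Type*} [MeasurableSpace Ω] [MeasurableSpace Ω'] [MeasurableSpace E]
    [MeasurableSpace Θ] (P : Measure Ω) [IsProbabilityMeasure P]
    (h : Ω → Ω') (X : Ω → E) (hh : Measurable h) (hX : Measurable X)
    (hi : ProbabilityTheory.IndepFun h X P) (W : Ω' → ℝ≥0∞) (hW : Measurable W)
    (T : Ω' → Θ) (hT : Measurable T) (R : Θ × E → ℝ≥0∞) (hR : Measurable R)
    (hR1 : ∀ θ, ∫⁻ x, R (θ, x) ∂(P.map X) ≤ 1) :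
    ∫⁻ ω, W (h ω) * R (T (h ω), X ω) ∂P ≤ ∫⁻ ω, W (h ω) ∂P := by
  have := hi.map_prod_eq_prod_map_map hh.aemeasurable hX.aemeasurable
  have hm : Measurable fun z : Ω' × E => W z.1 * R (T z.1, z.2) := by fun_prop
  have : IsProbabilityMeasure (P.map X) := Measure.isProbabilityMeasure_map hX.aemeasurable
  have : IsProbabilityMeasure (P.map h) := Measure.isProbabilityMeasure_map hh.aemeasurable
  calc ∫⁻ ω, W (h ω) * R (T (h ω), X ω) ∂P
      = ∫⁻ z, W z.1 * R (T z.1, z.2) ∂(P.map fun ω => (h ω, X ω)) :=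
        (lintegral_map hm (hh.prodMk hX)).symm
    _ = ∫⁻ y, ∫⁻ x, W y * R (T y, x) ∂(P.map X) ∂(P.map h) := by
        rw [‹P.map _ = _›, lintegral_prod _ hm.aemeasurable]
    _ ≤ ∫⁻ y, W y ∂(P.map h) := by
        refine lintegral_mono fun y => ?_
        dsimp only
        have hRy : Measurable fun x => R (T y, x) := hR.comp measurable_prodMk_left
        rw [lintegral_const_mul _ hRy]
        exact mul_le_of_le_one_right' (hR1 _)
    _ = _ := lintegral_map hW hh

/-- the product process frozen once it reaches the level -/
def frozenProd {Ω : Type*} (c : ℝ≥0∞) (r : ℕ → Ω → ℝ≥0∞) : ℕ → Ω → ℝ≥0∞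
  | 0, _ => 1
  | n + 1, ω => if c ≤ frozenProd c r n ω then frozenProd c r n ω else frozenProd c r n ω * r n ω

lemma ville {Ω : Type*} [m : MeasurableSpace Ω] (P : Measure Ω) [IsProbabilityMeasure P]
    (F : ℕ → MeasurableSpace Ω) (hFm : ∀ n, F n ≤ m) (hmono : Monotone F)
    (r : ℕ → Ω → ℝ≥0∞) (hr : ∀ n, Measurable[F (n + 1)] (r n))
    (hstep : ∀ n (W : Ω → ℝ≥0∞), Measurable[F n] W → ∫⁻ ω, W ω * r n ω ∂P ≤ ∫⁻ ω, W ω ∂P)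
    (c : ℝ≥0∞) :
    P {ω | ∃ n, c ≤ ∏ i ∈ Finset.range n, r i ω} ≤ c⁻¹ := by
  have hZm : ∀ n, Measurable[F n] (frozenProd c r n) := by
    intro n
    induction n with
    | zero => exact measurable_const
    | succ n ih =>
      have ih' : Measurable[F (n + 1)] (frozenProd c r n) := ih.mono (hmono n.le_succ) le_rfl
      have hs : MeasurableSet[F (n + 1)] {ω | c ≤ frozenProd c r n ω} := ih' measurableSet_Ici
      exact Measurable.ite (m := F (n + 1)) hs ih'
        (Measurable.mul (m := F (n + 1)) ih' (hr n))
  have hZ1 : ∀ n, ∫⁻ ω, frozenProd c r n ω ∂P ≤ 1 := by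
    intro n
    induction n with
    | zero => simp [frozenProd]
    | succ n ih =>
      refine le_trans ?_ ih
      have hs : MeasurableSet[F n] {ω | c ≤ frozenProd c r n ω} := hZm n measurableSet_Ici
      set s := {ω | c ≤ frozenProd c r n ω} with hsdef
      have hU : Measurable[F n] (s.indicator (frozenProd c r n)) :=
        Measurable.indicator (m := F n) (hZm n) hs
      have hV : Measurable[F n] (sᶜ.indicator (frozenProd c r n)) :=
        Measurable.indicator (m := F n) (hZm n) (MeasurableSet.compl (m := F n) hs)
      calc ∫⁻ ω, frozenProd c r (n + 1) ω ∂P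
          = ∫⁻ ω, (s.indicator (frozenProd c r n) ω + sᶜ.indicator (frozenProd c r n) ω * r n ω) ∂P := by
            refine lintegral_congr fun ω => ?_
            by_cases h : c ≤ frozenProd c r n ω
            · have : ω ∈ s := h
              simp [frozenProd, h, this]
            · have : ω ∉ s := h
              simp [frozenProd, h, this]
        _ = ∫⁻ ω, s.indicator (frozenProd c r n) ω ∂P
              + ∫⁻ ω, sᶜ.indicator (frozenProd c r n) ω * r n ω ∂P :=
            lintegral_add_left (hU.mono (hFm n) le_rfl) _
        _ ≤ ∫⁻ ω, s.indicator (frozenProd c r n) ω ∂P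
              + ∫⁻ ω, sᶜ.indicator (frozenProd c r n) ω ∂P := by
            exact add_le_add le_rfl (hstep n _ hV)
        _ = ∫⁻ ω, frozenProd c r n ω ∂P := by
            rw [← lintegral_add_left (hU.mono (hFm n) le_rfl)]
            refine lintegral_congr fun ω => ?_
            exact congrFun (Set.indicator_self_add_compl s (frozenProd c r n)) ω
  have hinv : ∀ n ω, c ≤ frozenProd c r n ω ∨ frozenProd c r n ω = ∏ i ∈ Finset.range n, r i ω := by
    intro n ω
    induction n with
    | zero => right; simp [frozenProd]
    | succ n ih =>
      by_cases h : c ≤ frozenProd c r n ω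
      · left; simp [frozenProd, h]
      · right
        rw [Finset.prod_range_succ, ← ih.resolve_left h]
        simp [frozenProd, h]
  have hst : ∀ ω, Monotone fun n => (c ≤ frozenProd c r n ω : Prop) := by
    intro ω
    refine monotone_nat_of_le_succ fun n h => ?_
    have h' : c ≤ frozenProd c r n ω := h
    simp [frozenProd, h']
  have hsub : {ω | ∃ n, c ≤ ∏ i ∈ Finset.range n, r i ω} ⊆ ⋃ n, {ω | c ≤ frozenProd c r n ω} := by
    rintro ω ⟨n, hn⟩
    refine Set.mem_iUnion.2 ⟨n, ?_⟩
    rcases hinv n ω with h | h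
    · exact h
    · exact hn.trans h.ge
  refine (measure_mono hsub).trans ?_
  have hmon : Monotone fun n => {ω | c ≤ frozenProd c r n ω} := fun a b hab ω h => hst ω hab h
  rw [hmon.measure_iUnion]
  refine iSup_le fun n => ?_
  rw [ENNReal.le_inv_iff_mul_le, mul_comm]
  exact (mul_meas_ge_le_lintegral ((hZm n).mono (hFm n) le_rfl) c).trans (hZ1 n)

/-- The running infimum p-value is valid at arbitrary random times:
for any `ℕ`-valued random variable `N` (not necessarily a stopping time) and every
`a ∈ [0,1]`, `sup_{θ*∈Θ₀} Pr_{θ*}(P̃_N ≤ a) ≤ a`, where `P̃_n = min_{s ≤ n} P_s` and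
`P_s = 1/M_{α,β,s}` (equal to `+∞` when `M_{α,β,s} = 0`). -/
theorem running_inf_p_value_valid
    {d : ℕ} (hd : 1 ≤ d)
    {π : Fin d → Type*} [∀ i, MeasurableSpace (π i)]
    (μ : ∀ i, Measure (π i)) [∀ i, SigmaFinite (μ i)]
    {Θ : Type*} [MeasurableSpace Θ]
    (p : Θ → (∀ i, π i) → ℝ≥0∞)
    (hp_meas : Measurable (Function.uncurry p))
    (hp_prob : ∀ θ : Θ, ∫⁻ x, p θ x ∂(Measure.pi μ) = 1)
    (α : Sd d → ℝ) (β : Td d → ℝ)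
    (hα : ∀ S, 0 ≤ α S) (hβ : ∀ T, 0 ≤ β T)
    (γ : ℝ) (hγ : γ = ∑ S, α S + ∑ T, β T) (hγpos : 0 < γ)
    {Ω : Type*} [MeasurableSpace Ω]
    (Pr : Measure Ω) [IsProbabilityMeasure Pr]
    (θstar : Θ)
    -- `X 0, X 1, X 2, …` is the i.i.d. sequence `X_1, X_2, …` (0-indexed),
    -- each observation having density `p(·;θ*)` with respect to `μ`
    (X : ℕ → Ω → (∀ i, π i))
    (hX : ∀ i, Measurable (X i))
    (hiid : ProbabilityTheory.iIndepFun X Pr)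
    (hlaw : ∀ i, Measure.map (X i) Pr = (Measure.pi μ).withDensity (p θstar))
    -- the natural filtration `F n = σ(X_1,…,X_n)` (so `F 0` is trivial)
    (F : ℕ → MeasurableSpace Ω)
    (hF : ∀ n, F n = MeasurableSpace.comap (fun ω => fun j : Fin n => X j ω)
      (inferInstance : MeasurableSpace (Fin n → ∀ i, π i)))
    -- non-anticipating estimators: `θtilde i` is the estimator `θ̃_i`
    -- built from `X_1,…,X_i`, i.e. measurable with respect to `F i`
    (θtilde : ℕ → Ω → Θ)
    (hθtilde : ∀ i, @Measurable Ω Θ (F i) _ (θtilde i))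
    -- null hypothesis parameter space and maximum composite likelihood
    -- estimators over `Θ₀`: `θhat n` is `F n`-measurable, `Θ₀`-valued and
    -- maximizes the composite likelihood of the first `n` observations over `Θ₀`
    (Θ0 : Set Θ)
    (θhat : ℕ → Ω → Θ)
    (hθhat_meas : ∀ n, @Measurable Ω Θ (F n) _ (θhat n))
    (hθhat_mem : ∀ n ω, θhat n ω ∈ Θ0)
    (hθhat_max : ∀ n ω, ∀ θ ∈ Θ0,
      (∏ i ∈ Finset.range n, compLik μ α β γ (p θ) (X i ω))
        ≤ ∏ i ∈ Finset.range n, compLik μ α β γ (p (θhat n ω)) (X i ω))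
    -- the DGP parameter lies in the null hypothesis set
    (hθstar : θstar ∈ Θ0)
    (N : Ω → ℕ) (hN : Measurable N)
    (a : ℝ) (ha0 : 0 ≤ a) (ha1 : a ≤ 1) :
    Pr {ω | (Finset.range (N ω + 1)).inf (fun s => (safeDiv
        (∏ i ∈ Finset.range s, compLik μ α β γ (p (θtilde i ω)) (X i ω))
        (∏ i ∈ Finset.range s, compLik μ α β γ (p (θhat s ω)) (X i ω)))⁻¹)
      ≤ ENNReal.ofReal a} ≤ ENNReal.ofReal a := by
  have hpθ : ∀ θ, Measurable (p θ) := fun θ => hp_meas.comp measurable_prodMk_left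
  have hFm : ∀ n, F n ≤ (inferInstance : MeasurableSpace Ω) := by
    intro n
    rw [hF n]
    exact Measurable.comap_le (measurable_pi_lambda _ fun j => hX j)
  have hmono : Monotone F := by
    intro a b hab
    rw [hF a, hF b]
    have : (fun ω => fun j : Fin a => X j ω) =
        (fun (v : Fin b → ∀ i, π i) (j : Fin a) => v (Fin.castLE hab j)) ∘
          (fun ω => fun j : Fin b => X j ω) := rfl
    rw [this, ← MeasurableSpace.comap_comp]
    refine MeasurableSpace.comap_mono (Measurable.comap_le ?_)
    exact measurable_pi_lambda _ fun j => measurable_pi_apply _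
  have hXF : ∀ n, Measurable[F (n + 1)] (X n) := by
    intro n
    rw [hF (n + 1)]
    exact (measurable_pi_apply (Fin.last n)).comp
      (comap_measurable (fun ω => fun j : Fin (n + 1) => X j ω))
  set R : Θ × (∀ i, π i) → ℝ≥0∞ := fun z => compRatio μ α β γ (p θstar) (p z.1) z.2 with hRdef
  have hRm : Measurable R := measurable_compRatio_param μ α β γ hp_meas (hpθ θstar)
  set r : ℕ → Ω → ℝ≥0∞ := fun n ω => R (θtilde n ω, X n ω) with hrdef
  have hr : ∀ n, Measurable[F (n + 1)] (r n) := by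
    intro n
    exact hRm.comp (Measurable.prodMk (m := F (n + 1))
      ((hθtilde n).mono (hmono n.le_succ) le_rfl) (hXF n))
  have hind : ∀ n, @ProbabilityTheory.IndepFun Ω Ω (∀ i, π i) _ (F n) _ id (X n) Pr := by
    intro n
    have h1 := hiid.indepFun_finset (Finset.range n) {n} (by simp) hX
    have hev : Measurable fun (v : ({n} : Finset ℕ) → ∀ i, π i) => v ⟨n, by simp⟩ :=
      measurable_pi_apply _
    have h2 := h1.comp
      (φ := fun (v : (Finset.range n) → ∀ i, π i) (j : Fin n) => v ⟨j, by simp⟩)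
      (ψ := fun (v : ({n} : Finset ℕ) → ∀ i, π i) => v ⟨n, by simp⟩)
      (measurable_pi_lambda _ fun j => measurable_pi_apply _)
      hev
    rw [ProbabilityTheory.IndepFun_iff_Indep] at h2
    refine (ProbabilityTheory.IndepFun_iff_Indep (mβ := F n) _ _ _).2 ?_
    rw [MeasurableSpace.comap_id, hF n]
    exact h2
  have hstep : ∀ n (W : Ω → ℝ≥0∞), Measurable[F n] W →
      ∫⁻ ω, W ω * r n ω ∂Pr ≤ ∫⁻ ω, W ω ∂Pr := by
    intro n W hW
    exact @indep_step Ω Ω (∀ i, π i) Θ _ (F n) _ _ Pr _ id (X n) (measurable_id'' (hFm n)) (hX n)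
      (hind n) W hW (θtilde n) (hθtilde n) R hRm (fun θ => by
        rw [hlaw n]
        exact compRatio_lintegral μ α β hα hβ γ hγ hγpos (hpθ _) (hpθ _) (hp_prob _) (hp_prob _))
  have hv := ville Pr F hFm hmono r hr hstep (ENNReal.ofReal a)⁻¹
  rw [inv_inv] at hv
  refine le_trans (measure_mono_ae ?_) hv
  have hgood : ∀ᵐ ω ∂Pr, ∀ i, ∀ S : Finset (Fin d),
      marginal μ S (p θstar) (X i ω) ≠ 0 ∧ marginal μ S (p θstar) (X i ω) ≠ ∞ := by
    rw [ae_all_iff]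
    intro i
    have h := ae_good μ (hpθ θstar) (hp_prob θstar)
    rw [← hlaw i] at h
    exact ae_of_ae_map (hX i).aemeasurable h
  filter_upwards [hgood] with ω hω hmem
  have hmem' : (Finset.range (N ω + 1)).inf (fun s => (safeDiv
        (∏ i ∈ Finset.range s, compLik μ α β γ (p (θtilde i ω)) (X i ω))
        (∏ i ∈ Finset.range s, compLik μ α β γ (p (θhat s ω)) (X i ω)))⁻¹)
      ≤ ENNReal.ofReal a := hmem
  obtain ⟨s, -, hs⟩ := (Finset.inf_le_iff (by simp : ENNReal.ofReal a < ⊤)).1 hmem'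
  refine ⟨s, ?_⟩
  rw [ENNReal.inv_le_iff_inv_le] at hs
  refine hs.trans ((safeDiv_le _ _).trans ?_)
  have hc := fun i => compLik_pos_fin μ α β γ (hω i)
  refine (ENNReal.div_le_div_left (hθhat_max s ω θstar hθstar) _).trans ?_
  have he : ∏ i ∈ Finset.range s, compLik μ α β γ (p (θtilde i ω)) (X i ω) =
      (∏ i ∈ Finset.range s, r i ω) *
        ∏ i ∈ Finset.range s, compLik μ α β γ (p θstar) (X i ω) := by
    rw [← Finset.prod_mul_distrib]
    exact Finset.prod_congr rfl fun i _ => compLik_eq_ratio μ α β hα hβ γ hγpos (hω i)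
  rw [he, ENNReal.mul_div_cancel_right]
  · exact Finset.prod_ne_zero_iff.2 fun i _ => (hc i).1
  · exact ENNReal.prod_ne_top fun i _ => (hc i).2
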